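/- For n ≥ 3, the subspace K^{2,2} = ker(Aa) ∩ ker(Ac) ⊆ 𝓗²⊗S² has dimension C(n+1,2)² − n·C(n+2,3) − C(n+1,2), and K^{2,2} = 0 for n = 1, 2. -/

import Mathlib

open MvPolynomial

/-- The physicists' Hermite polynomial `H_k`, satisfying the Rodrigues formula
`H_k(t) = (−1)^k e^{t²} (d/dt)^k e^{−t²}` (equivalently, `H_0 = 1`,
`H_{k+1} = 2X·H_k − H_k'`). -/
noncomputable def physHermite : ℕ → Polynomial ℝ
  | 0 => 1
  | (k + 1) => 2 * (Polynomial.X * physHermite k) - Polynomial.derivative (physHermite k)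

/-- The Hermite polynomial `H_I = H_{i₁}(y₁)⋯H_{iₙ}(yₙ)`, as a polynomial in the
variables `y₁,…,yₙ` (the `Sum.inl` variables) of `ℝ[y₁,…,yₙ,e¹,…,eⁿ]`. -/
noncomputable def HI {n : ℕ} (I : Fin n → ℕ) : MvPolynomial (Fin n ⊕ Fin n) ℝ :=
  ∏ i, Polynomial.aeval (X (Sum.inl i)) (physHermite (I i))

/-- The monomial `e^J = (e¹)^{j₁}⋯(eⁿ)^{jₙ}` in the symmetric-algebra variables
(the `Sum.inr` variables), spanning `S^p = Sym^p((ℝⁿ)*)` for `|J| = p`. -/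
noncomputable def eJ {n : ℕ} (J : Fin n → ℕ) : MvPolynomial (Fin n ⊕ Fin n) ℝ :=
  ∏ i, (X (Sum.inr i) : MvPolynomial (Fin n ⊕ Fin n) ℝ) ^ (J i)

/-- `𝓗^q ⊗ S^p`: the span of the vectors `H_I e^J` with `|I| = q`, `|J| = p`. -/
noncomputable def HS (n q p : ℕ) : Submodule ℝ (MvPolynomial (Fin n ⊕ Fin n) ℝ) :=
  Submodule.span ℝ
    {x | ∃ I J : Fin n → ℕ, (∑ i, I i) = q ∧ (∑ i, J i) = p ∧ x = HI I * eJ J}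

/-- The operator `Ac = Σ_k A_k ⊗ c_k`, where `A_k = (1/2)∂_{y_k}` and `c_k` is
symmetric multiplication by `e^k`. -/
noncomputable def acL (n : ℕ) :
    MvPolynomial (Fin n ⊕ Fin n) ℝ →ₗ[ℝ] MvPolynomial (Fin n ⊕ Fin n) ℝ :=
  ∑ k : Fin n, (1 / 2 : ℝ) •
    ((pderiv (Sum.inl k)).toLinearMap ∘ₗ LinearMap.mulLeft ℝ (X (Sum.inr k)))

/-- The operator `Aa = Σ_k A_k ⊗ a_k`, where `A_k = (1/2)∂_{y_k}` and `a_k = ∂_{e_k}` is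
contraction with `e_k`. -/
noncomputable def aaL (n : ℕ) :
    MvPolynomial (Fin n ⊕ Fin n) ℝ →ₗ[ℝ] MvPolynomial (Fin n ⊕ Fin n) ℝ :=
  ∑ k : Fin n, (1 / 2 : ℝ) •
    ((pderiv (Sum.inl k)).toLinearMap ∘ₗ (pderiv (Sum.inr k)).toLinearMap)


/-- the bihomogeneous basis-like elements -/
noncomputable def qq {n : ℕ} (i j k l : Fin n) : MvPolynomial (Fin n ⊕ Fin n) ℝ :=
  (X (Sum.inl i) * X (Sum.inl j) - C (if i = j then (1/2 : ℝ) else 0)) *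
    (X (Sum.inr k) * X (Sum.inr l))

noncomputable def Th (n : ℕ) :
    (Sym2 (Fin n) × Sym2 (Fin n) → ℝ) →ₗ[ℝ] MvPolynomial (Fin n ⊕ Fin n) ℝ where
  toFun t := ∑ i, ∑ j, ∑ k, ∑ l, t (s(i,j), s(k,l)) • qq i j k l
  map_add' a b := by simp [add_smul, Finset.sum_add_distrib]
  map_smul' c a := by simp [mul_smul, Finset.smul_sum]

theorem Th_apply {n : ℕ} (t : Sym2 (Fin n) × Sym2 (Fin n) → ℝ) :
    Th n t = ∑ i, ∑ j, ∑ k, ∑ l, t (s(i,j), s(k,l)) • qq i j k l := rfl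

theorem exists_t {n : ℕ} (F : Fin n → Fin n → Fin n → Fin n → ℝ)
    (h1 : ∀ i j k l, F i j k l = F j i k l) (h2 : ∀ i j k l, F i j k l = F i j l k) :
    ∃ t : Sym2 (Fin n) × Sym2 (Fin n) → ℝ, ∀ i j k l, t (s(i,j), s(k,l)) = F i j k l :=
  ⟨fun p => Sym2.lift₂ ⟨F, fun a b c d => ⟨h1 a b c d, h2 a b c d⟩⟩ p.1 p.2, fun _ _ _ _ => rfl⟩

theorem qq_mem {n : ℕ} (i j k l : Fin n) : qq i j k l ∈ LinearMap.range (Th n) := by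
  obtain ⟨t, ht⟩ := exists_t (fun a b c d =>
    (1/4 : ℝ) * (((if a = i then 1 else 0) * (if b = j then 1 else 0) +
      (if a = j then 1 else 0) * (if b = i then 1 else 0)) *
     ((if c = k then 1 else 0) * (if d = l then 1 else 0) +
      (if c = l then 1 else 0) * (if d = k then 1 else 0))))
    (fun a b c d => by ring) (fun a b c d => by ring)
  refine ⟨t, ?_⟩
  have e1 : qq j i k l = qq i j k l := by
    simp only [qq, eq_comm (a := j)]; ring
  have e2 : qq i j l k = qq i j k l := by
    simp only [qq]; ring
  have e3 : qq j i l k = qq i j k l := by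
    simp only [qq, eq_comm (a := j)]; ring
  simp only [Th_apply, ht, mul_add, add_mul, add_smul, Finset.sum_add_distrib]
  simp only [mul_ite, ite_mul, mul_one, mul_zero, one_mul, zero_mul, ite_smul, zero_smul, Finset.sum_ite_eq', Finset.mem_univ, if_true, Finset.sum_const_zero, Finset.sum_ite_irrel]
  rw [e1, e2, e3]
  simp only [← add_smul]
  norm_num

theorem HI_eq {n : ℕ} (i j : Fin n) : HI (Pi.single i 1 + Pi.single j 1 : Fin n → ℕ) =
    4 * (X (Sum.inl i) * X (Sum.inl j) - C (if i = j then (1/2 : ℝ) else 0)) := by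
  have h0 : physHermite 0 = 1 := rfl
  have h1 : physHermite 1 = 2 * Polynomial.X := by
    simp [physHermite]
  have h2 : physHermite 2 = 4 * Polynomial.X ^ 2 - 2 := by
    rw [physHermite, h1]
    have : (2 : Polynomial ℝ) = Polynomial.C 2 := rfl
    rw [this, Polynomial.derivative_C_mul]
    simp [← this]
    ring
  unfold HI
  by_cases h : i = j
  · subst h
    rw [Finset.prod_eq_single i]
    · have : (C (1/2 : ℝ) : MvPolynomial (Fin n ⊕ Fin n) ℝ) * 2 = 1 := by
        rw [show (2 : MvPolynomial (Fin n ⊕ Fin n) ℝ) = C 2 from rfl, ← C_mul]; norm_num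
      simp only [Pi.add_apply, Pi.single_eq_same, Nat.reduceAdd, h2, if_true]
      simp only [map_sub, map_mul, map_pow, Polynomial.aeval_X, map_ofNat]
      linear_combination 2 * this
    · intro b _ hb
      simp [hb, h0]
    · simp
  · have h' : j ≠ i := fun e => h e.symm
    rw [← Finset.prod_subset (Finset.subset_univ {i, j}), Finset.prod_pair h]
    · have e2 : ∀ a : Fin n, Polynomial.aeval (X (Sum.inl a) : MvPolynomial (Fin n ⊕ Fin n) ℝ)
          (2 : Polynomial ℝ) = 2 := fun a => map_ofNat _ 2
      simp [h, h', h1, e2]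
      ring
    · intro b _ hb
      simp at hb
      simp [hb.1, hb.2, h0]

theorem eJ_eq {n : ℕ} (i j : Fin n) : eJ (Pi.single i 1 + Pi.single j 1 : Fin n → ℕ) =
    X (Sum.inr i) * X (Sum.inr j) := by
  have key : ∀ k : Fin n, ∏ a, (X (Sum.inr a) : MvPolynomial (Fin n ⊕ Fin n) ℝ) ^
      ((Pi.single k 1 : Fin n → ℕ) a) = X (Sum.inr k) := by
    intro k
    rw [Finset.prod_eq_single k]
    · simp
    · intro b _ hb
      simp [hb]
    · simp
  simp only [eJ, Pi.add_apply, pow_add, Finset.prod_mul_distrib, key]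

theorem exists_pair {n : ℕ} (I : Fin n → ℕ) (h : ∑ i, I i = 2) :
    ∃ i j, I = Pi.single i 1 + Pi.single j 1 := by
  have one : ∀ (m : ℕ) (J : Fin n → ℕ), ∑ i, J i = m + 1 →
      ∃ i, ∃ J' : Fin n → ℕ, J = Pi.single i 1 + J' ∧ ∑ i, J' i = m := by
    intro m J hJ
    have : ∃ i, J i ≠ 0 := by
      by_contra hc
      push Not at hc
      simp [hc] at hJ
    obtain ⟨i, hi⟩ := this
    have e : J = Pi.single i 1 + (J - Pi.single i 1) := by
      funext a
      by_cases ha : a = i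
      · subst ha; simp; omega
      · simp [ha]
    refine ⟨i, _, e, ?_⟩
    rw [e] at hJ
    simp only [Pi.add_apply, Finset.sum_add_distrib] at hJ
    simp at hJ
    simp
    omega
  obtain ⟨i, J, rfl, hJ⟩ := one 1 I h
  obtain ⟨j, J', rfl, hJ'⟩ := one 0 J hJ
  refine ⟨i, j, ?_⟩
  have : J' = 0 := by
    funext a
    simpa using (Finset.sum_eq_zero_iff.1 hJ') a (Finset.mem_univ a)
  simp [this]

theorem range_Th (n : ℕ) : LinearMap.range (Th n) = HS n 2 2 := by
  have hq : ∀ i j k l : Fin n, HI (Pi.single i 1 + Pi.single j 1 : Fin n → ℕ) *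
      eJ (Pi.single k 1 + Pi.single l 1 : Fin n → ℕ) = (4 : ℝ) • qq i j k l := by
    intro i j k l
    rw [HI_eq, eJ_eq, qq, smul_eq_C_mul, show (4 : MvPolynomial (Fin n ⊕ Fin n) ℝ) = C 4 from rfl]
    ring
  apply le_antisymm
  · rintro _ ⟨t, rfl⟩
    rw [Th_apply]
    refine Submodule.sum_mem _ fun i _ => Submodule.sum_mem _ fun j _ =>
      Submodule.sum_mem _ fun k _ => Submodule.sum_mem _ fun l _ => Submodule.smul_mem _ _ ?_
    have : qq i j k l = (1/4 : ℝ) • ((4 : ℝ) • qq i j k l) := by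
      rw [smul_smul]; norm_num
    rw [this, ← hq]
    refine Submodule.smul_mem _ _ (Submodule.subset_span ⟨_, _, ?_, ?_, rfl⟩) <;>
      simp [Finset.sum_add_distrib]
  · refine Submodule.span_le.2 ?_
    rintro _ ⟨I, J, hI, hJ, rfl⟩
    obtain ⟨i, j, rfl⟩ := exists_pair I hI
    obtain ⟨k, l, rfl⟩ := exists_pair J hJ
    rw [hq]
    exact Submodule.smul_mem _ _ (qq_mem i j k l)

theorem sym_l {n : ℕ} (t : Sym2 (Fin n) × Sym2 (Fin n) → ℝ) (i j k l : Fin n) :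
    t (s(i,j), s(k,l)) = t (s(j,i), s(k,l)) := by rw [Sym2.eq_swap]

theorem sym_r {n : ℕ} (t : Sym2 (Fin n) × Sym2 (Fin n) → ℝ) (i j k l : Fin n) :
    t (s(i,j), s(k,l)) = t (s(i,j), s(l,k)) := by rw [Sym2.eq_swap (a := k)]

theorem dll {n : ℕ} (a i : Fin n) : pderiv (Sum.inl a)
    (X (Sum.inl i) : MvPolynomial (Fin n ⊕ Fin n) ℝ) = C (if i = a then 1 else 0) := by
  by_cases h : i = a <;> simp [pderiv_X, Pi.single_apply, h]

theorem drr {n : ℕ} (a i : Fin n) : pderiv (Sum.inr a)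
    (X (Sum.inr i) : MvPolynomial (Fin n ⊕ Fin n) ℝ) = C (if i = a then 1 else 0) := by
  by_cases h : i = a <;> simp [pderiv_X, Pi.single_apply, h]

theorem dlr {n : ℕ} (a i : Fin n) : pderiv (Sum.inl a)
    (X (Sum.inr i) : MvPolynomial (Fin n ⊕ Fin n) ℝ) = 0 := by
  simp [pderiv_X, Pi.single_apply]

theorem drl {n : ℕ} (a i : Fin n) : pderiv (Sum.inr a)
    (X (Sum.inl i) : MvPolynomial (Fin n ⊕ Fin n) ℝ) = 0 := by
  simp [pderiv_X, Pi.single_apply]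

theorem Cite {n : ℕ} (a b : Fin n) : (if a = b then 1 else 0 : MvPolynomial (Fin n ⊕ Fin n) ℝ)
    = C (if a = b then 1 else 0) := by
  split_ifs <;> simp

theorem Th_inj (n : ℕ) : Function.Injective (Th n) := by
  rw [injective_iff_map_eq_zero]
  intro t ht
  funext ⟨p, q⟩
  induction p using Sym2.ind with | _ a b =>
  induction q using Sym2.ind with | _ c d =>
  have h := congrArg (fun f => pderiv (Sum.inr d) (pderiv (Sum.inr c)
    (pderiv (Sum.inl b) (pderiv (Sum.inl a) f)))) ht
  have key : ∀ i j k l : Fin n, pderiv (Sum.inr d) (pderiv (Sum.inr c)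
    (pderiv (Sum.inl b) (pderiv (Sum.inl a) (qq i j k l)))) =
      ((if i = a then 1 else 0) * (if j = b then 1 else 0) +
      (if i = b then 1 else 0) * (if j = a then 1 else 0)) *
     ((if k = c then 1 else 0) * (if l = d then 1 else 0) +
      (if k = d then 1 else 0) * (if l = c then 1 else 0)) := by
    intro i j k l
    simp only [qq, Derivation.leibniz, map_sub, map_add, map_zero, pderiv_C, dll, dlr, drl, drr, Cite,
      smul_eq_mul, mul_zero, zero_mul, add_zero, zero_add, sub_zero]
    ring
  simp only [Th_apply, map_sum, Derivation.map_smul, key, map_zero] at h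
  simp only [mul_add, add_mul, smul_add, Finset.sum_add_distrib] at h
  simp only [mul_ite, ite_mul, mul_one, mul_zero, one_mul, zero_mul, smul_ite, smul_zero, Finset.sum_ite_eq', Finset.mem_univ, if_true, Finset.sum_const_zero, Finset.sum_ite_irrel] at h
  rw [← sym_l t a b c d, ← sym_l t a b d c, ← sym_r t a b c d] at h
  simp only [← add_smul] at h
  simpa [smul_eq_C_mul] using h

theorem ac_qq {n : ℕ} (i j k l : Fin n) : acL n (qq i j k l) = (1/2 : ℝ) •
    (X (Sum.inl i) * (X (Sum.inr j) * X (Sum.inr k) * X (Sum.inr l)) +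
     X (Sum.inl j) * (X (Sum.inr i) * X (Sum.inr k) * X (Sum.inr l))) := by
  simp only [acL, LinearMap.sum_apply, LinearMap.smul_apply, LinearMap.comp_apply, LinearMap.mulLeft_apply,
    Derivation.coeFn_coe, ← Finset.smul_sum]
  congr 1
  have key : ∀ m : Fin n, pderiv (Sum.inl m) (X (Sum.inr m) * qq i j k l) =
     (if i = m then 1 else 0) * (X (Sum.inl j) * (X (Sum.inr m) * X (Sum.inr k) * X (Sum.inr l))) +
     (if j = m then 1 else 0) * (X (Sum.inl i) * (X (Sum.inr m) * X (Sum.inr k) * X (Sum.inr l))) := by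
    intro m
    simp only [qq, Derivation.leibniz, map_sub, map_add, map_zero, pderiv_C, dll, dlr, drl, drr, Cite,
      smul_eq_mul, mul_zero, zero_mul, add_zero, zero_add, sub_zero]
    ring
  simp only [key, Finset.sum_add_distrib, ite_mul, one_mul, zero_mul, Finset.sum_ite_eq, Finset.mem_univ, if_true]
  ring

theorem aa_qq {n : ℕ} (i j k l : Fin n) : aaL n (qq i j k l) = (1/2 : ℝ) •
    ((if i = k then 1 else 0) * (X (Sum.inl j) * X (Sum.inr l)) +
     (if i = l then 1 else 0) * (X (Sum.inl j) * X (Sum.inr k)) +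
     (if j = k then 1 else 0) * (X (Sum.inl i) * X (Sum.inr l)) +
     (if j = l then 1 else 0) * (X (Sum.inl i) * X (Sum.inr k))) := by
  simp only [aaL, LinearMap.sum_apply, LinearMap.smul_apply, LinearMap.comp_apply,
    Derivation.coeFn_coe, ← Finset.smul_sum]
  congr 1
  have key : ∀ m : Fin n, pderiv (Sum.inl m) (pderiv (Sum.inr m) (qq i j k l)) =
     ((if i = m then 1 else 0) * X (Sum.inl j) + (if j = m then 1 else 0) * X (Sum.inl i)) *
     ((if k = m then 1 else 0) * X (Sum.inr l) + (if l = m then 1 else 0) * X (Sum.inr k)) := by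
    intro m
    simp only [qq, Derivation.leibniz, map_sub, map_add, map_zero, pderiv_C, dll, dlr, drl, drr, Cite,
      smul_eq_mul, mul_zero, zero_mul, add_zero, zero_add, sub_zero]
    ring
  simp only [key, add_mul, Finset.sum_add_distrib, ite_mul, one_mul, zero_mul, Finset.sum_ite_eq, Finset.mem_univ, if_true, eq_comm (a := k),
    eq_comm (a := l)]
  split_ifs <;> ring

theorem ac_Th {n : ℕ} (t : Sym2 (Fin n) × Sym2 (Fin n) → ℝ) :
    acL n (Th n t) = ∑ i, ∑ j, ∑ k, ∑ l, t (s(i,j), s(k,l)) •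
      (X (Sum.inl i) * (X (Sum.inr j) * X (Sum.inr k) * X (Sum.inr l))) := by
  simp only [Th_apply, map_sum, map_smul, ac_qq]
  simp only [smul_add, Finset.sum_add_distrib]
  have : (∑ i : Fin n, ∑ j : Fin n, ∑ k : Fin n, ∑ l : Fin n, t (s(i,j), s(k,l)) • (1/2 : ℝ) •
      (X (Sum.inl j) * (X (Sum.inr i) * X (Sum.inr k) * X (Sum.inr l)) :
        MvPolynomial (Fin n ⊕ Fin n) ℝ)) =
      ∑ i, ∑ j, ∑ k, ∑ l, t (s(i,j), s(k,l)) • (1/2 : ℝ) •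
      (X (Sum.inl i) * (X (Sum.inr j) * X (Sum.inr k) * X (Sum.inr l))) := by
    rw [Finset.sum_comm]
    refine Finset.sum_congr rfl fun i _ => Finset.sum_congr rfl fun j _ =>
      Finset.sum_congr rfl fun k _ => Finset.sum_congr rfl fun l _ => ?_
    rw [sym_l t]
  rw [this]
  simp only [← Finset.sum_add_distrib]
  refine Finset.sum_congr rfl fun i _ => Finset.sum_congr rfl fun j _ =>
      Finset.sum_congr rfl fun k _ => Finset.sum_congr rfl fun l _ => ?_
  rw [← smul_add, ← add_smul]
  norm_num

theorem ac_ker {n : ℕ} (t : Sym2 (Fin n) × Sym2 (Fin n) → ℝ) :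
    acL n (Th n t) = 0 ↔ ∀ i j k l : Fin n,
      t (s(i,j), s(k,l)) + t (s(i,k), s(j,l)) + t (s(i,l), s(j,k)) = 0 := by
  rw [ac_Th]
  constructor
  · intro ht a b c d
    have h := congrArg (fun f => pderiv (Sum.inr d) (pderiv (Sum.inr c)
      (pderiv (Sum.inr b) (pderiv (Sum.inl a) f)))) ht
    have key : ∀ i j k l : Fin n, pderiv (Sum.inr d) (pderiv (Sum.inr c)
      (pderiv (Sum.inr b) (pderiv (Sum.inl a)
        (X (Sum.inl i) * (X (Sum.inr j) * X (Sum.inr k) * X (Sum.inr l)) :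
          MvPolynomial (Fin n ⊕ Fin n) ℝ)))) =
        (if i = a then 1 else 0) *
        ((if j = b then 1 else 0) * ((if k = c then 1 else 0) * (if l = d then 1 else 0))
        + (if j = b then 1 else 0) * ((if k = d then 1 else 0) * (if l = c then 1 else 0))
        + (if j = c then 1 else 0) * ((if k = b then 1 else 0) * (if l = d then 1 else 0))
        + (if j = c then 1 else 0) * ((if k = d then 1 else 0) * (if l = b then 1 else 0))
        + (if j = d then 1 else 0) * ((if k = b then 1 else 0) * (if l = c then 1 else 0))
        + (if j = d then 1 else 0) * ((if k = c then 1 else 0) * (if l = b then 1 else 0))) := by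
      intro i j k l
      simp only [Derivation.leibniz, map_add, map_zero, pderiv_C, dll, dlr, drl, drr, Cite,
        smul_eq_mul, mul_zero, zero_mul, add_zero, zero_add]
      ring
    simp only [map_sum, Derivation.map_smul, key, map_zero] at h
    simp only [mul_add, smul_add, Finset.sum_add_distrib] at h
    simp only [mul_ite, ite_mul, mul_one, mul_zero, one_mul, zero_mul, smul_ite, smul_zero,
      Finset.sum_ite_eq', Finset.mem_univ, if_true, Finset.sum_const_zero,
      Finset.sum_ite_irrel] at h
    simp only [← add_smul, smul_eq_C_mul, mul_one, ← C_add, C_eq_zero] at h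
    have e1 := sym_r t a b c d
    have e2 := sym_r t a c b d
    have e3 := sym_r t a d b c
    linarith
  · intro h
    set m : Fin n → Fin n → Fin n → Fin n → MvPolynomial (Fin n ⊕ Fin n) ℝ :=
      fun i j k l => X (Sum.inl i) * (X (Sum.inr j) * X (Sum.inr k) * X (Sum.inr l)) with hm
    have e1 : ∑ i, ∑ j, ∑ k, ∑ l, t (s(i,j), s(k,l)) • m i j k l =
        ∑ i, ∑ j, ∑ k, ∑ l, t (s(i,k), s(j,l)) • m i j k l := by
      refine Finset.sum_congr rfl fun i _ => ?_
      rw [Finset.sum_comm]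
      refine Finset.sum_congr rfl fun j _ =>
        Finset.sum_congr rfl fun k _ => Finset.sum_congr rfl fun l _ => ?_
      congr 1
      simp only [hm]; ring
    have e2 : ∑ i, ∑ j, ∑ k, ∑ l, t (s(i,k), s(j,l)) • m i j k l =
        ∑ i, ∑ j, ∑ k, ∑ l, t (s(i,l), s(j,k)) • m i j k l := by
      refine Finset.sum_congr rfl fun i _ => Finset.sum_congr rfl fun j _ => ?_
      rw [Finset.sum_comm]
      refine Finset.sum_congr rfl fun k _ => Finset.sum_congr rfl fun l _ => ?_
      congr 1
      simp only [hm]; ring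
    have e3 : ∑ i, ∑ j, ∑ k, ∑ l, t (s(i,j), s(k,l)) • m i j k l +
        ∑ i, ∑ j, ∑ k, ∑ l, t (s(i,k), s(j,l)) • m i j k l +
        ∑ i, ∑ j, ∑ k, ∑ l, t (s(i,l), s(j,k)) • m i j k l = 0 := by
      simp only [← Finset.sum_add_distrib, ← add_smul, h, zero_smul, Finset.sum_const_zero]
    rw [← e2, ← e1] at e3
    have : (3 : ℝ) • ∑ i, ∑ j, ∑ k, ∑ l, t (s(i,j), s(k,l)) • m i j k l = 0 := by
      rw [← e3]; module
    exact (smul_eq_zero.1 this).resolve_left (by norm_num)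

theorem aa_Th {n : ℕ} (t : Sym2 (Fin n) × Sym2 (Fin n) → ℝ) :
    aaL n (Th n t) = ∑ i, ∑ j, (2 * ∑ k, t (s(i,k), s(k,j))) •
      (X (Sum.inl i) * X (Sum.inr j)) := by
  simp only [Th_apply, map_sum, map_smul, aa_qq]
  have key : ∀ i j : Fin n, ((2 * ∑ k, t (s(i,k), s(k,j))) •
      (X (Sum.inl i) * X (Sum.inr j)) : MvPolynomial (Fin n ⊕ Fin n) ℝ) =
      ∑ k, (4 : ℝ) • (1/2 : ℝ) • t (s(i,k), s(k,j)) • (X (Sum.inl i) * X (Sum.inr j)) := by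
    intro i j
    simp only [← Finset.smul_sum, ← Finset.sum_smul]
    module
  have four : ∀ x : MvPolynomial (Fin n ⊕ Fin n) ℝ, (4 : ℝ) • x = x + x + x + x := by
    intro x; module
  simp only [key, four, smul_add, Finset.sum_add_distrib]
  simp only [ite_mul, one_mul, zero_mul, smul_ite, smul_zero,
      Finset.sum_ite_eq, Finset.mem_univ, if_true, Finset.sum_const_zero,
      Finset.sum_ite_irrel]
  refine congrArg₂ (· + ·) (congrArg₂ (· + ·) (congrArg₂ (· + ·) ?_ ?_) ?_) ?_
  · rw [Finset.sum_comm]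
    refine Finset.sum_congr rfl fun i _ => ?_
    rw [Finset.sum_comm]
    refine Finset.sum_congr rfl fun j _ => Finset.sum_congr rfl fun k _ => ?_
    rw [sym_l t, smul_comm]
  · rw [Finset.sum_comm]
    refine Finset.sum_congr rfl fun i _ => ?_
    rw [Finset.sum_comm]
    refine Finset.sum_congr rfl fun j _ => Finset.sum_congr rfl fun k _ => ?_
    rw [sym_l t, sym_r t, smul_comm]
  · refine Finset.sum_congr rfl fun i _ => ?_
    rw [Finset.sum_comm]
    refine Finset.sum_congr rfl fun j _ => Finset.sum_congr rfl fun k _ => ?_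
    rw [smul_comm]
  · refine Finset.sum_congr rfl fun i _ => ?_
    rw [Finset.sum_comm]
    refine Finset.sum_congr rfl fun j _ => Finset.sum_congr rfl fun k _ => ?_
    rw [sym_r t, smul_comm]

theorem aa_ker {n : ℕ} (t : Sym2 (Fin n) × Sym2 (Fin n) → ℝ) :
    aaL n (Th n t) = 0 ↔ ∀ i j : Fin n, ∑ k, t (s(i,k), s(k,j)) = 0 := by
  rw [aa_Th]
  constructor
  · intro ht a b
    have h := congrArg (fun f => pderiv (Sum.inr b) (pderiv (Sum.inl a) f)) ht
    have key : ∀ i j : Fin n, pderiv (Sum.inr b) (pderiv (Sum.inl a)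
        (X (Sum.inl i) * X (Sum.inr j) : MvPolynomial (Fin n ⊕ Fin n) ℝ)) =
        (if i = a then 1 else 0) * (if j = b then 1 else 0) := by
      intro i j
      simp only [Derivation.leibniz, map_add, map_zero, pderiv_C, dll, dlr, drl, drr, Cite,
        smul_eq_mul, mul_zero, zero_mul, add_zero, zero_add]
    simp only [map_sum, Derivation.map_smul, key, map_zero] at h
    simp only [mul_ite, ite_mul, mul_one, mul_zero, one_mul, zero_mul, smul_ite, smul_zero,
      Finset.sum_ite_eq', Finset.mem_univ, if_true, Finset.sum_const_zero,
      Finset.sum_ite_irrel] at h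
    simp only [smul_eq_C_mul, mul_one, C_eq_zero] at h
    linarith
  · intro h
    simp [h]

/-- representatives of multisets of size three -/
theorem exists_rep (n : ℕ) : ∃ a : Sym (Fin n) 3 → Fin n × Fin n × Fin n,
    ∀ s, ((a s).1 ::ₛ (a s).2.1 ::ₛ (a s).2.2 ::ₛ Sym.nil) = s := by
  have : ∀ s : Sym (Fin n) 3, ∃ p : Fin n × Fin n × Fin n,
      (p.1 ::ₛ p.2.1 ::ₛ p.2.2 ::ₛ Sym.nil) = s := by
    intro s
    obtain ⟨a, s1, rfl⟩ := s.exists_eq_cons_of_succ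
    obtain ⟨b, s2, rfl⟩ := s1.exists_eq_cons_of_succ
    obtain ⟨c, s3, rfl⟩ := s2.exists_eq_cons_of_succ
    exact ⟨(a, b, c), by rw [Sym.eq_nil_of_card_zero s3]⟩
  choose a ha using this
  exact ⟨a, ha⟩

noncomputable def rep {n : ℕ} : Sym (Fin n) 3 → Fin n × Fin n × Fin n :=
  Classical.choose (exists_rep n)

theorem rep_spec {n : ℕ} (s : Sym (Fin n) 3) :
    ((rep s).1 ::ₛ (rep s).2.1 ::ₛ (rep s).2.2 ::ₛ Sym.nil) = s :=
  Classical.choose_spec (exists_rep n) s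

noncomputable def Psi (n : ℕ) : (Sym2 (Fin n) × Sym2 (Fin n) → ℝ) →ₗ[ℝ]
    ((Fin n × Sym (Fin n) 3 → ℝ) × (Sym2 (Fin n) → ℝ)) where
  toFun t := (fun p => t (s(p.1, (rep p.2).1), s((rep p.2).2.1, (rep p.2).2.2)) +
      t (s(p.1, (rep p.2).2.1), s((rep p.2).1, (rep p.2).2.2)) +
      t (s(p.1, (rep p.2).2.2), s((rep p.2).1, (rep p.2).2.1)),
    Sym2.lift ⟨fun i l => ∑ k, t (s(i,k), s(k,l)) + ∑ k, t (s(l,k), s(k,i)),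
      fun i l => add_comm _ _⟩)
  map_add' a b := by
    refine Prod.ext (funext fun p => ?_) (funext fun p => ?_)
    · simp; ring
    · induction p using Sym2.ind with | _ i j =>
      simp [Finset.sum_add_distrib]; ring
  map_smul' c a := by
    refine Prod.ext (funext fun p => ?_) (funext fun p => ?_)
    · simp; ring
    · induction p using Sym2.ind with | _ i j =>
      simp [← Finset.mul_sum]; ring

theorem pair_symm {n : ℕ} (t : Sym2 (Fin n) × Sym2 (Fin n) → ℝ) (h : ∀ i j k l : Fin n,
      t (s(i,j), s(k,l)) + t (s(i,k), s(j,l)) + t (s(i,l), s(j,k)) = 0) (i j k l : Fin n) :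
    t (s(i,j), s(k,l)) = t (s(k,l), s(i,j)) := by
  have h1 := h i j k l
  have h2 := h j i k l
  have h3 := h k l i j
  have h4 := h l k i j
  rw [sym_l t j i k l] at h2
  rw [sym_l t k i l j, sym_r t i k l j, sym_l t k j l i, sym_r t j k l i] at h3
  rw [sym_l t l k, sym_l t l i k j, sym_r t i l k j, sym_l t l j k i, sym_r t j l k i] at h4
  linarith

theorem Psi_ker {n : ℕ} (t : Sym2 (Fin n) × Sym2 (Fin n) → ℝ) :
    Psi n t = 0 ↔ aaL n (Th n t) = 0 ∧ acL n (Th n t) = 0 := by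
  rw [aa_ker, ac_ker]
  have hB : (∀ p, (Psi n t).1 p = 0) ↔ ∀ i j k l : Fin n,
      t (s(i,j), s(k,l)) + t (s(i,k), s(j,l)) + t (s(i,l), s(j,k)) = 0 := by
    constructor
    · intro h i j k l
      have h1 := h (i, j ::ₛ k ::ₛ l ::ₛ Sym.nil)
      have h2 := rep_spec (j ::ₛ k ::ₛ l ::ₛ Sym.nil)
      simp only [Psi, LinearMap.coe_mk, AddHom.coe_mk] at h1
      generalize rep (j ::ₛ k ::ₛ l ::ₛ Sym.nil) = r at h1 h2
      obtain ⟨a, b, c⟩ := r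
      have h3 : (a ::ₘ b ::ₘ c ::ₘ 0) = (j ::ₘ k ::ₘ l ::ₘ 0) := congrArg Subtype.val h2
      simp only at h1
      have q1 := sym_r t i a b c
      have q2 := sym_r t i b a c
      have q3 := sym_r t i c a b
      have hp : List.Perm [a, b, c] [j, k, l] := Multiset.coe_eq_coe.1 h3
      rw [← List.mem_permutations] at hp
      simp [List.permutations, List.permutationsAux, List.permutationsAux.rec] at hp
      rcases hp with ⟨rfl, rfl, rfl⟩ | ⟨rfl, rfl, rfl⟩ | ⟨rfl, rfl, rfl⟩ | ⟨rfl, rfl, rfl⟩ |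
        ⟨rfl, rfl, rfl⟩ | ⟨rfl, rfl, rfl⟩ <;> linarith
    · intro h p
      exact h _ _ _ _
  constructor
  · intro h
    have h1 := hB.1 (fun p => by rw [h]; rfl)
    refine ⟨fun i j => ?_, h1⟩
    have h2 := congrFun (congrArg Prod.snd h) s(i,j)
    simp only [Psi, LinearMap.coe_mk, AddHom.coe_mk, Sym2.lift_mk, Prod.snd_zero, Pi.zero_apply] at h2
    have : ∑ k, t (s(j,k), s(k,i)) = ∑ k, t (s(i,k), s(k,j)) := by
      refine Finset.sum_congr rfl fun k _ => ?_
      rw [pair_symm t h1, sym_l t, sym_r t]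
    linarith
  · rintro ⟨h1, h2⟩
    refine Prod.ext (funext fun p => hB.2 h2 p) (funext fun p => ?_)
    induction p using Sym2.ind with | _ i j =>
    simp [Psi, h1]

theorem Psi_surj {n : ℕ} (hn : 3 ≤ n) : Function.Surjective (Psi n) := by
  rintro ⟨u, r⟩
  set U : Fin n → Fin n → Fin n → Fin n → ℝ :=
    fun i j k l => u (i, j ::ₛ k ::ₛ l ::ₛ Sym.nil) with hU
  have s1 : ∀ i j k l, U i j k l = U i k j l := by
    intro i j k l; simp only [hU]; rw [Sym.cons_swap]
  have s2 : ∀ i j k l, U i j k l = U i j l k := by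
    intro i j k l; simp only [hU]; rw [Sym.cons_swap k l]
  obtain ⟨t1, ht1⟩ := exists_t (fun i j k l => (1/2) * (U i j k l + U j i k l) -
      (1/6) * (U i j k l + U j i k l + U k i j l + U l i j k))
      (fun i j k l => by rw [s1 k i j l, s1 l i j k]; ring)
      (fun i j k l => by rw [s2 i j k l, s2 j i k l]; ring)
  have hb1 : ∀ i j k l, t1 (s(i,j), s(k,l)) + t1 (s(i,k), s(j,l)) + t1 (s(i,l), s(j,k))
      = U i j k l := by
    intro i j k l
    rw [ht1, ht1, ht1, s1 i k j l, s1 i l j k, s2 i j l k, s2 k i l j, s2 j i l k, s2 l i k j]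
    ring
  obtain ⟨r1, hr1⟩ : ∃ r1 : Sym2 (Fin n) → ℝ, r1 = r - (Psi n t1).2 := ⟨_, rfl⟩
  have hn' : (3 : ℝ) ≤ n := by exact_mod_cast hn
  set tau : ℝ := (∑ k, r1 s(k,k)) / (2 - 2 * n) with htau
  set d : Fin n → Fin n → ℝ := fun i j => if i = j then 1 else 0 with hd
  have dsymm : ∀ i j, d i j = d j i := by
    intro i j; simp only [hd, eq_comm]
  set h : Fin n → Fin n → ℝ := fun i j => (r1 s(i,j) + tau * d i j) / (2 - n) / 2 with hh
  have hsymm : ∀ i j, h i j = h j i := by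
    intro i j; simp only [hh]; rw [Sym2.eq_swap, dsymm]
  have htr : ∑ k, h k k = tau / 2 := by
    have h1 : (2 - 2 * n : ℝ) ≠ 0 := by linarith
    have h2 : (2 - n : ℝ) ≠ 0 := by linarith
    have h3 : ∑ k, r1 s(k,k) = tau * (2 - 2 * n) := by
      rw [htau, div_mul_cancel₀ _ h1]
    simp only [hh, ← Finset.sum_div, Finset.sum_add_distrib, ← Finset.mul_sum]
    rw [h3]
    simp [hd]
    field_simp
    ring
  obtain ⟨t2, ht2⟩ := exists_t (fun i j k l => 2 * (d i j * h k l + h i j * d k l) -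
      (d i k * h j l + d i l * h j k + d j k * h i l + d j l * h i k))
      (fun i j k l => by rw [dsymm i j, hsymm i j]; ring)
      (fun i j k l => by rw [dsymm k l, hsymm k l]; ring)
  have hb2 : ∀ i j k l, t2 (s(i,j), s(k,l)) + t2 (s(i,k), s(j,l)) + t2 (s(i,l), s(j,k)) = 0 := by
    intro i j k l
    rw [ht2, ht2, ht2, dsymm k j, hsymm k j, dsymm l j, dsymm l k, hsymm l j, hsymm l k]
    ring
  have htr2 : ∀ i l, ∑ k, t2 (s(i,k), s(k,l)) = r1 s(i,l) / 2 := by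
    intro i l
    have h2 : (2 - n : ℝ) ≠ 0 := by linarith
    have e : ∑ k, t2 (s(i,k), s(k,l)) = (2 - n) * h i l - (∑ k, h k k) * d i l := by
      simp only [ht2, Finset.sum_sub_distrib, Finset.sum_add_distrib, ← Finset.mul_sum,
        ← Finset.sum_mul]
      simp [hd]
      ring
    rw [e, htr]
    simp only [hh]
    field_simp
    ring
  refine ⟨t1 + t2, ?_⟩
  rw [map_add]
  refine Prod.ext (funext fun p => ?_) (funext fun p => ?_)
  · obtain ⟨i, s⟩ := p
    simp only [Psi, LinearMap.coe_mk, AddHom.coe_mk, Prod.fst_add, Pi.add_apply]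
    rw [hb1, hb2]
    simp only [hU, rep_spec, add_zero]
  · have : (Psi n t2).2 = r1 := by
      funext q
      induction q using Sym2.ind with | _ i j =>
      simp only [Psi, LinearMap.coe_mk, AddHom.coe_mk, Sym2.lift_mk, htr2]
      rw [Sym2.eq_swap (a := j)]
      ring
    rw [Prod.snd_add, this, hr1]
    simp

theorem K_eq (n : ℕ) : HS n 2 2 ⊓ LinearMap.ker (aaL n) ⊓ LinearMap.ker (acL n) =
    (LinearMap.ker (Psi n)).map (Th n) := by
  ext x
  simp only [← range_Th, Submodule.mem_inf, LinearMap.mem_range, LinearMap.mem_ker,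
    Submodule.mem_map]
  constructor
  · rintro ⟨⟨⟨t, rfl⟩, h1⟩, h2⟩
    exact ⟨t, (Psi_ker t).2 ⟨h1, h2⟩, rfl⟩
  · rintro ⟨t, ht, rfl⟩
    have := (Psi_ker t).1 ht
    exact ⟨⟨⟨t, rfl⟩, this.1⟩, this.2⟩

theorem Psi_small {n : ℕ} (hn : n = 1 ∨ n = 2) : LinearMap.ker (Psi n) = ⊥ := by
  rw [LinearMap.ker_eq_bot']
  intro t ht
  rw [Psi_ker, aa_ker, ac_ker] at ht
  obtain ⟨htr, hB⟩ := ht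
  have ps := pair_symm t hB
  funext ⟨p, q⟩
  induction p using Sym2.ind with | _ a b =>
  induction q using Sym2.ind with | _ c d =>
  simp only [Pi.zero_apply]
  rcases hn with rfl | rfl
  · have := hB 0 0 0 0
    simp only [Subsingleton.elim a 0, Subsingleton.elim b 0, Subsingleton.elim c 0,
      Subsingleton.elim d 0]
    linarith
  · have e10 : (s(1, 0) : Sym2 (Fin 2)) = s(0, 1) := Sym2.eq_swap
    have b1 := hB 0 0 0 0
    have b2 := hB 0 0 0 1
    have b3 := hB 0 0 1 1
    have b4 := hB 0 1 1 1
    have b5 := hB 1 1 1 1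
    have p1 := ps 0 0 0 1
    have p2 := ps 0 0 1 1
    have p3 := ps 0 1 1 1
    have tr := htr 0 0
    simp only [Fin.sum_univ_two, e10] at b1 b2 b3 b4 b5 p1 p2 p3 tr
    fin_cases a <;> fin_cases b <;> fin_cases c <;> fin_cases d <;>
      simp only [Fin.zero_eta, Fin.mk_one, e10] <;> linarith

/-- for `n ≥ 3`, `K^{2,2} = ker Aa ∩ ker Ac ⊆ 𝓗²⊗S²` has dimension
`C(n+1,2)² − n·C(n+2,3) − C(n+1,2)`, and `K^{2,2} = 0` for `n = 1, 2`. -/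
theorem stmt_16 (n : ℕ) :
    (3 ≤ n →
      Module.finrank ℝ
          ↥(HS n 2 2 ⊓ LinearMap.ker (aaL n) ⊓ LinearMap.ker (acL n)) =
        ((n + 1).choose 2) ^ 2 - n * (n + 2).choose 3 - (n + 1).choose 2) ∧
    (n = 1 ∨ n = 2 →
      HS n 2 2 ⊓ LinearMap.ker (aaL n) ⊓ LinearMap.ker (acL n) = ⊥) := by
  
  rw [K_eq]
  refine ⟨fun hn => ?_, fun hn => by rw [Psi_small hn, Submodule.map_bot]⟩
  rw [LinearEquiv.finrank_eq (Submodule.equivMapOfInjective (Th n) (Th_inj n) _).symm]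
  have h := LinearMap.finrank_range_add_finrank_ker (Psi n)
  rw [LinearMap.range_eq_top.2 (Psi_surj hn), finrank_top, Module.finrank_prod,
    Module.finrank_fintype_fun_eq_card, Module.finrank_fintype_fun_eq_card,
    Module.finrank_fintype_fun_eq_card, Fintype.card_prod, Fintype.card_prod, Sym2.card,
    Sym.card_sym_eq_choose, Fintype.card_fin] at h
  have e : n + 3 - 1 = n + 2 := rfl
  rw [e] at h
  rw [sq]
  omega
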